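/- Let S₀ ⊂ ℤ² be a shape (a finite nonempty subset of ℤ² that is connected with respect to grid adjacency), and let v ∈ ℤ² be a nonzero vector. Let S₁ = S₀ + v and S₂ = S₁ + v. Then there exists a connected component of S₂ \ S₁ (with respect to grid adjacency) that does not intersect S₀. -/

import Mathlib

/-- Grid adjacency on ℤ²: two points are adjacent iff their ℓ¹-distance is 1. -/
def GridAdj (p q : ℤ × ℤ) : Prop := |p.1 - q.1| + |p.2 - q.2| = 1

/-- A subset of ℤ² is grid-connected if any two of its points are joined by a
path of adjacent points staying inside the set. -/
def GridConnected (S : Set (ℤ × ℤ)) : Prop :=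
  ∀ p ∈ S, ∀ q ∈ S,
    Relation.ReflTransGen (fun a b => GridAdj a b ∧ a ∈ S ∧ b ∈ S) p q

/-- `C` is a connected component of `S`: a maximal nonempty connected subset. -/
def IsGridComponent (S C : Set (ℤ × ℤ)) : Prop :=
  C ⊆ S ∧ C.Nonempty ∧ GridConnected C ∧
    ∀ D : Set (ℤ × ℤ), C ⊆ D → D ⊆ S → GridConnected D → D = C

/-- Translate of a subset of ℤ² by a vector. -/
def setTranslate (S : Set (ℤ × ℤ)) (v : ℤ × ℤ) : Set (ℤ × ℤ) := (· + v) '' S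

/-!
Give `x` the level `l` if `x - l • v` is the last point of `S₀` on the line `x + ℤ v`. A point of
`S₂ \ S₁` has level `2` or at most `0`, and points of level `2` are outside `S₀`. So it suffices
to find `x` of level `2` from which no path of grid steps that keep the level or lower it by at
least `2` ever changes the level: the component of `x` then consists of points of level `2`.

If there were no such `x`, finiteness would produce a path of this kind from some `x` to
`x - k • v` with `k > 0`. Clearly `k ≠ 1`. Choosing `x` extreme in the direction transverse to `v`
puts the path in a half-plane with both ends on the boundary, so it has to meet its own translate
by `(k - 1) • v`; this gives such a path from some `y` to `y - (k - 1) • v`, and descent on `k`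
ends in a contradiction.

That two paths in a half-plane with interleaved ends on the boundary meet is proved by counting
signed crossings with a ray, a discrete winding number.
-/

section Grid

theorem gridAdj_iff {p q : ℤ × ℤ} :
    GridAdj p q ↔ p.1 = q.1 ∧ (q.2 = p.2 + 1 ∨ p.2 = q.2 + 1) ∨
      p.2 = q.2 ∧ (q.1 = p.1 + 1 ∨ p.1 = q.1 + 1) := by
  unfold GridAdj
  rcases abs_cases (p.1 - q.1) with h₁ | h₁ <;> rcases abs_cases (p.2 - q.2) with h₂ | h₂ <;> omega

theorem GridAdj.symm {p q : ℤ × ℤ} (h : GridAdj p q) : GridAdj q p := by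
  rw [gridAdj_iff] at h ⊢
  omega

theorem GridAdj.add_right {p q : ℤ × ℤ} (h : GridAdj p q) (u : ℤ × ℤ) :
    GridAdj (p + u) (q + u) := by
  simpa only [GridAdj, Prod.fst_add, Prod.snd_add, add_sub_add_right_eq_sub] using h

theorem GridAdj.sub_left {p q : ℤ × ℤ} (h : GridAdj p q) (u : ℤ × ℤ) :
    GridAdj (u - p) (u - q) := by
  simp only [gridAdj_iff, Prod.fst_sub, Prod.snd_sub] at h ⊢
  omega

theorem GridAdj.sub_right {p q : ℤ × ℤ} (h : GridAdj p q) (u : ℤ × ℤ) :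
    GridAdj (p - u) (q - u) := by
  simpa only [sub_eq_add_neg] using h.add_right (-u)

theorem mem_setTranslate {S : Set (ℤ × ℤ)} {v x : ℤ × ℤ} : x ∈ setTranslate S v ↔ x - v ∈ S := by
  simp [setTranslate, sub_eq_add_neg]

/-- Grid adjacency inside `S`, the relation whose paths define `GridConnected S`. -/
abbrev GridAdjIn (S : Set (ℤ × ℤ)) (a b : ℤ × ℤ) : Prop := GridAdj a b ∧ a ∈ S ∧ b ∈ S

theorem GridAdjIn.mono {S T : Set (ℤ × ℤ)} (hST : S ⊆ T) : GridAdjIn S ≤ GridAdjIn T :=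
  fun _ _ ⟨hab, ha, hb⟩ => ⟨hab, hST ha, hST hb⟩

instance (S : Set (ℤ × ℤ)) : Std.Symm (GridAdjIn S) where
  symm _ _ := fun ⟨hab, ha, hb⟩ => ⟨hab.symm, hb, ha⟩

/-- The set of points joined to `x` by a grid path inside `S`; when `x ∈ S` this is the connected
component of `x` in `S`. -/
def gridComponentOf (S : Set (ℤ × ℤ)) (x : ℤ × ℤ) : Set (ℤ × ℤ) :=
  {y | Relation.ReflTransGen (GridAdjIn S) x y}

theorem gridConnected_gridComponentOf (S : Set (ℤ × ℤ)) (x : ℤ × ℤ) :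
    GridConnected (gridComponentOf S x) := by
  have path_from_x : ∀ q ∈ gridComponentOf S x,
      Relation.ReflTransGen (GridAdjIn (gridComponentOf S x)) x q := by
    intro q hq
    induction hq with
    | refl => exact .refl
    | tail hb hbc ih => exact ih.tail ⟨hbc.1, hb, hb.tail hbc⟩
  exact fun p hp q hq => (symm (path_from_x p hp)).trans (path_from_x q hq)

theorem isGridComponent_gridComponentOf {S : Set (ℤ × ℤ)} {x : ℤ × ℤ} (hx : x ∈ S) :
    IsGridComponent S (gridComponentOf S x) := by
  refine ⟨fun y hy => ?_, ⟨x, .refl⟩, gridConnected_gridComponentOf S x, fun D hCD hDS hD => ?_⟩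
  · cases hy with
    | refl => exact hx
    | tail _ hby => exact hby.2.2
  · refine Set.Subset.antisymm (fun y hy => ?_) hCD
    exact Relation.ReflTransGen.mono (GridAdjIn.mono hDS) x y (hD x (hCD .refl) y hy)

end Grid

section Sequences

variable {α : Type*} {r : α → α → Prop}

theorem exists_seq_of_reflTransGen {x y : α} (h : Relation.ReflTransGen r x y) :
    ∃ (n : ℕ) (γ : ℕ → α), γ 0 = x ∧ γ n = y ∧ ∀ i < n, r (γ i) (γ (i + 1)) := by
  induction h using Relation.ReflTransGen.head_induction_on with
  | refl => exact ⟨0, fun _ => y, rfl, rfl, by simp⟩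
  | @head a b hab _ ih =>
    obtain ⟨n, γ, rfl, hn, hγ⟩ := ih
    refine ⟨n + 1, fun i => i.casesOn a γ, rfl, hn, fun i hi => ?_⟩
    cases i with
    | zero => exact hab
    | succ i => exact hγ i (by omega)

theorem reflTransGen_of_seq {γ : ℕ → α} {n i j : ℕ} (hγ : ∀ k < n, r (γ k) (γ (k + 1)))
    (hij : i ≤ j) (hjn : j ≤ n) : Relation.ReflTransGen r (γ i) (γ j) :=
  (reflTransGen_of_succ_of_le (fun k l => r (γ k) (γ l))
    (fun k hk => hγ k (hk.2.trans_le hjn)) hij).lift γ fun _ _ h => h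

end Sequences

section RayCrossing

/-- The indicator of the nonnegative integers. -/
def nonnegIndicator (t : ℤ) : ℤ := if 0 ≤ t then 1 else 0

/-- The signed number of times the grid edge from `x` to `y` crosses the horizontal ray
`{(s, -1/2) | 1/2 ≤ s}`. The ray is placed off the grid, and its end lies in a unit square with
corner `0`; the value is meaningful only for adjacent `x` and `y`. -/
def rayCrossing (x y : ℤ × ℤ) : ℤ :=
  if 0 < x.1 then nonnegIndicator y.2 - nonnegIndicator x.2 else 0

/-- A primitive of `rayCrossing` on the nonzero points of a half-plane containing the ray. -/
def rayPotential (x : ℤ × ℤ) : ℤ := if 0 < x.1 then nonnegIndicator x.2 else 0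

theorem rayCrossing_square {a b p q : ℤ × ℤ} (hab : GridAdj a b) (hpq : GridAdj p q)
    (hap : a ≠ p) (haq : a ≠ q) (hbp : b ≠ p) (hbq : b ≠ q) :
    rayCrossing (a - p) (b - p) + rayCrossing (b - p) (b - q) =
      rayCrossing (a - p) (a - q) + rayCrossing (a - q) (b - q) := by
  rw [gridAdj_iff] at hab hpq
  simp only [Ne, Prod.ext_iff] at hap haq hbp hbq
  simp only [rayCrossing, nonnegIndicator, Prod.fst_sub, Prod.snd_sub]
  grind (splits := 20)

/-- The number of signed crossings of the path `β 0, …, β n` with the ray translated to `p`. -/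
def rayCrossings (β : ℕ → ℤ × ℤ) (n : ℕ) (p : ℤ × ℤ) : ℤ :=
  ∑ j ∈ Finset.range n, rayCrossing (β j - p) (β (j + 1) - p)

theorem rayCrossings_add_rayCrossing {β : ℕ → ℤ × ℤ} {n : ℕ} {p q : ℤ × ℤ}
    (hβ : ∀ j < n, GridAdj (β j) (β (j + 1))) (hpq : GridAdj p q)
    (hp : ∀ j ≤ n, β j ≠ p) (hq : ∀ j ≤ n, β j ≠ q) :
    rayCrossings β n p + rayCrossing (β n - p) (β n - q) =
      rayCrossing (β 0 - p) (β 0 - q) + rayCrossings β n q := by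
  induction n with
  | zero => simp [rayCrossings]
  | succ n ih =>
    have shorter := ih (fun j hj => hβ j (by omega)) (fun j hj => hp j (by omega))
      (fun j hj => hq j (by omega))
    have square := rayCrossing_square (hβ n (by omega)) hpq (hp n (by omega)) (hq n (by omega))
      (hp (n + 1) le_rfl) (hq (n + 1) le_rfl)
    simp only [rayCrossings, Finset.sum_range_succ] at shorter ⊢
    linarith

end RayCrossing

section HalfPlane

/-- The two-dimensional cross product; `w` being fixed, its level sets are the lines of
direction `w`. -/
def cross (w x : ℤ × ℤ) : ℤ := w.1 * x.2 - w.2 * x.1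

theorem cross_sub (w x y : ℤ × ℤ) : cross w (x - y) = cross w x - cross w y := by
  simp only [cross, Prod.fst_sub, Prod.snd_sub]
  ring

theorem cross_add_smul (w x : ℤ × ℤ) (k : ℤ) : cross w (x + k • w) = cross w x := by
  simp only [cross, Prod.fst_add, Prod.snd_add, Prod.smul_fst, Prod.smul_snd, smul_eq_mul]
  ring

theorem cross_neg_sub_smul (w x : ℤ × ℤ) (k : ℤ) : cross (-w) (x - k • w) = cross (-w) x := by
  rw [← cross_add_smul (-w) x k, smul_neg, sub_eq_add_neg]

variable {w x y : ℤ × ℤ}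

theorem rayCrossing_eq_zero_of_cross_nonneg (hw₁ : 0 < w.1) (hw₂ : 0 ≤ w.2) (hxy : GridAdj x y)
    (hx : 0 ≤ cross w x) (hy : 0 ≤ cross w y) : rayCrossing x y = 0 := by
  have nonneg_of_pos : ∀ z : ℤ × ℤ, 0 ≤ cross w z → 0 < z.1 → 0 ≤ z.2 := by
    intro z hz hz₁
    unfold cross at hz
    nlinarith [mul_nonneg hw₂ hz₁.le]
  have hx₂ := nonneg_of_pos x hx
  have hy₂ := nonneg_of_pos y hy
  rw [gridAdj_iff] at hxy
  simp only [rayCrossing, nonnegIndicator]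
  grind

theorem rayCrossing_eq_rayPotential_sub_of_cross_nonpos (hw₁ : 0 < w.1) (hw₂ : 0 ≤ w.2)
    (hxy : GridAdj x y) (hx₀ : x ≠ 0) (hy₀ : y ≠ 0) (hx : cross w x ≤ 0) (hy : cross w y ≤ 0) :
    rayCrossing x y = rayPotential y - rayPotential x := by
  have nonpos_of_nonpos : ∀ z : ℤ × ℤ, cross w z ≤ 0 → z.1 ≤ 0 → z.2 ≤ 0 := by
    intro z hz hz₁
    unfold cross at hz
    nlinarith [mul_nonneg hw₂ (neg_nonneg.2 hz₁)]
  have hx₂ := nonpos_of_nonpos x hx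
  have hy₂ := nonpos_of_nonpos y hy
  rw [gridAdj_iff] at hxy
  simp only [Ne, Prod.ext_iff, Prod.fst_zero, Prod.snd_zero] at hx₀ hy₀
  simp only [rayCrossing, rayPotential, nonnegIndicator]
  grind

theorem rayCrossings_eq_rayPotential_sub_of_cross_le {β : ℕ → ℤ × ℤ} {n : ℕ} {p : ℤ × ℤ}
    (hw₁ : 0 < w.1) (hw₂ : 0 ≤ w.2) (hβ : ∀ j < n, GridAdj (β j) (β (j + 1)))
    (hp : ∀ j ≤ n, β j ≠ p) (hle : ∀ j ≤ n, cross w (β j) ≤ cross w p) :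
    rayCrossings β n p = rayPotential (β n - p) - rayPotential (β 0 - p) := by
  have cross_nonpos : ∀ j ≤ n, cross w (β j - p) ≤ 0 := fun j hj => by
    rw [cross_sub]
    exact sub_nonpos.2 (hle j hj)
  rw [← Finset.sum_range_sub fun j => rayPotential (β j - p)]
  refine Finset.sum_congr rfl fun j hj => ?_
  have hj := Finset.mem_range.1 hj
  exact rayCrossing_eq_rayPotential_sub_of_cross_nonpos hw₁ hw₂ ((hβ j hj).sub_right p)
    (sub_ne_zero.2 (hp j hj.le)) (sub_ne_zero.2 (hp (j + 1) hj))
    (cross_nonpos j hj.le) (cross_nonpos (j + 1) hj)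

theorem rayPotential_smul_of_pos (hw₁ : 0 < w.1) (hw₂ : 0 ≤ w.2) {k : ℤ} (hk : 0 < k) :
    rayPotential (k • w) = 1 := by
  simp [rayPotential, nonnegIndicator, mul_pos hk hw₁, mul_nonneg hk.le hw₂]

theorem rayPotential_smul_of_neg (hw₁ : 0 < w.1) {k : ℤ} (hk : k < 0) :
    rayPotential (k • w) = 0 := by
  simp [rayPotential, (mul_neg_of_neg_of_pos hk hw₁).le]

end HalfPlane

section InterleavedPaths

/-- Two grid paths `α 0, …, α m` and `β 0, …, β n` in a closed half-plane whose boundary line has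
direction `w`, with the endpoints `α 0`, `β 0`, `α m`, `β n` on that line in this order. -/
structure InterleavedPaths (w : ℤ × ℤ) (α β : ℕ → ℤ × ℤ) (m n : ℕ) : Prop where
  adj_left : ∀ i < m, GridAdj (α i) (α (i + 1))
  adj_right : ∀ j < n, GridAdj (β j) (β (j + 1))
  cross_left_le : ∀ i ≤ m, cross w (α i) ≤ cross w (α 0)
  cross_right_le : ∀ j ≤ n, cross w (β j) ≤ cross w (α 0)
  endpoints : ∃ b c d : ℤ, 0 < b ∧ b < c ∧ c < d ∧
    β 0 = α 0 + b • w ∧ α m = α 0 + c • w ∧ β n = α 0 + d • w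

namespace InterleavedPaths

variable {w : ℤ × ℤ} {α β : ℕ → ℤ × ℤ} {m n : ℕ}

/-- As `p` runs along `α`, the endpoints of `β` stay on the side of `p` away from the ray, so the
crossing number of `β` only changes when `p` meets `β`. -/
theorem rayCrossings_end_eq_start (h : InterleavedPaths w α β m n) (hw₁ : 0 < w.1) (hw₂ : 0 ≤ w.2)
    (hdisj : ∀ i ≤ m, ∀ j ≤ n, β j ≠ α i) :
    rayCrossings β n (α m) = rayCrossings β n (α 0) := by
  obtain ⟨b, c, d, -, -, -, hβ₀, -, hβn⟩ := h.endpoints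
  have no_crossing : ∀ k : ℤ, ∀ i < m,
      rayCrossing (α 0 + k • w - α i) (α 0 + k • w - α (i + 1)) = 0 := by
    intro k i hi
    refine rayCrossing_eq_zero_of_cross_nonneg hw₁ hw₂ ((h.adj_left i hi).sub_left _) ?_ ?_ <;>
      rw [cross_sub, cross_add_smul, sub_nonneg]
    exacts [h.cross_left_le i hi.le, h.cross_left_le (i + 1) hi]
  suffices ∀ i ≤ m, rayCrossings β n (α i) = rayCrossings β n (α 0) from this m le_rfl
  intro i hi
  induction i with
  | zero => rfl
  | succ i ih =>
    have step := rayCrossings_add_rayCrossing h.adj_right (h.adj_left i hi)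
      (hdisj i (by omega)) (hdisj (i + 1) hi)
    rw [hβ₀, hβn, no_crossing d i hi, no_crossing b i hi, add_zero, zero_add] at step
    rw [← step, ih (by omega)]

theorem exists_eq_of_quadrant (h : InterleavedPaths w α β m n) (hw₁ : 0 < w.1) (hw₂ : 0 ≤ w.2) :
    ∃ i ≤ m, ∃ j ≤ n, β j = α i := by
  by_contra! hdisj
  have crossings_eq := h.rayCrossings_end_eq_start hw₁ hw₂ hdisj
  obtain ⟨b, c, d, hb, hbc, hcd, hβ₀, hαm, hβn⟩ := h.endpoints
  have cross_le_end : ∀ j ≤ n, cross w (β j) ≤ cross w (α m) := by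
    rw [hαm, cross_add_smul]
    exact h.cross_right_le
  rw [rayCrossings_eq_rayPotential_sub_of_cross_le hw₁ hw₂ h.adj_right (hdisj m le_rfl)
      cross_le_end,
    rayCrossings_eq_rayPotential_sub_of_cross_le hw₁ hw₂ h.adj_right (hdisj 0 m.zero_le)
      h.cross_right_le,
    hαm, hβ₀, hβn] at crossings_eq
  simp only [add_sub_add_left_eq_sub, add_sub_cancel_left, ← sub_smul] at crossings_eq
  rw [rayPotential_smul_of_pos hw₁ hw₂ (sub_pos.2 hcd),
    rayPotential_smul_of_neg hw₁ (sub_neg.2 hbc),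
    rayPotential_smul_of_pos hw₁ hw₂ (by omega : 0 < d),
    rayPotential_smul_of_pos hw₁ hw₂ hb] at crossings_eq
  omega

end InterleavedPaths

/-- Rotation of the grid by a quarter turn. -/
def quarterTurn (p : ℤ × ℤ) : ℤ × ℤ := (-p.2, p.1)

theorem quarterTurn_injective : Function.Injective quarterTurn := by
  intro p q h
  simp only [quarterTurn, Prod.mk.injEq, neg_inj] at h
  exact Prod.ext h.2 h.1

theorem quarterTurn_add_smul (p w : ℤ × ℤ) (k : ℤ) :
    quarterTurn (p + k • w) = quarterTurn p + k • quarterTurn w := by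
  ext <;> simp [quarterTurn, add_comm]

theorem cross_quarterTurn (w x : ℤ × ℤ) : cross (quarterTurn w) (quarterTurn x) = cross w x := by
  simp only [cross, quarterTurn]
  ring

theorem GridAdj.quarterTurn {p q : ℤ × ℤ} (h : GridAdj p q) :
    GridAdj (quarterTurn p) (quarterTurn q) := by
  simp only [gridAdj_iff, _root_.quarterTurn] at h ⊢
  omega

theorem quarterTurn_induction {P : ℤ × ℤ → Prop} (quadrant : ∀ w, 0 < w.1 → 0 ≤ w.2 → P w)
    (turn : ∀ w, P (quarterTurn w) → P w) {w : ℤ × ℤ} (hw : w ≠ 0) : P w := by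
  obtain ⟨a, b⟩ := w
  have hab : ¬(a = 0 ∧ b = 0) := by simpa using hw
  by_cases h₀ : 0 < a ∧ 0 ≤ b
  · exact quadrant _ h₀.1 h₀.2
  refine turn _ ?_
  by_cases h₁ : 0 < -b ∧ 0 ≤ a
  · exact quadrant _ h₁.1 h₁.2
  refine turn _ ?_
  by_cases h₂ : 0 < -a ∧ 0 ≤ -b
  · exact quadrant _ h₂.1 h₂.2
  exact turn _ (quadrant _ (by simp only [quarterTurn]; omega) (by simp only [quarterTurn]; omega))

namespace InterleavedPaths

variable {w : ℤ × ℤ} {α β : ℕ → ℤ × ℤ} {m n : ℕ}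

theorem quarterTurn (h : InterleavedPaths w α β m n) :
    InterleavedPaths (quarterTurn w) (quarterTurn ∘ α) (quarterTurn ∘ β) m n where
  adj_left i hi := (h.adj_left i hi).quarterTurn
  adj_right j hj := (h.adj_right j hj).quarterTurn
  cross_left_le i hi := by simpa only [Function.comp, cross_quarterTurn] using h.cross_left_le i hi
  cross_right_le j hj := by
    simpa only [Function.comp, cross_quarterTurn] using h.cross_right_le j hj
  endpoints := by
    obtain ⟨b, c, d, hb, hbc, hcd, hβ₀, hαm, hβn⟩ := h.endpoints
    refine ⟨b, c, d, hb, hbc, hcd, ?_, ?_, ?_⟩ <;>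
      simp only [Function.comp, ← quarterTurn_add_smul, *]

theorem exists_eq (h : InterleavedPaths w α β m n) (hw : w ≠ 0) :
    ∃ i ≤ m, ∃ j ≤ n, β j = α i := by
  revert α β
  apply quarterTurn_induction ?quadrant ?turn hw
  case quadrant => exact fun w hw₁ hw₂ α β h => h.exists_eq_of_quadrant hw₁ hw₂
  case turn =>
    intro w ih α β h
    obtain ⟨i, hi, j, hj, hij⟩ := ih h.quarterTurn
    exact ⟨i, hi, j, hj, quarterTurn_injective hij⟩

end InterleavedPaths

theorem exists_chord_of_cross_le {w : ℤ × ℤ} (hw : w ≠ 0) {γ : ℕ → ℤ × ℤ} {n : ℕ} {k : ℤ}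
    (hk : 2 ≤ k) (hγ : ∀ i < n, GridAdj (γ i) (γ (i + 1))) (hend : γ n = γ 0 + k • w)
    (hle : ∀ i ≤ n, cross w (γ i) ≤ cross w (γ 0)) :
    ∃ i ≤ n, ∃ j ≤ n, γ i = γ j + (k - 1) • w := by
  have interleaved : InterleavedPaths w γ (fun i => γ i + (k - 1) • w) n n :=
    { adj_left := hγ
      adj_right := fun i hi => (hγ i hi).add_right _
      cross_left_le := hle
      cross_right_le := fun i hi => by simpa only [cross_add_smul] using hle i hi
      endpoints := ⟨k - 1, k, k + (k - 1), by omega, by omega, by omega, rfl, hend, by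
        rw [hend, add_smul k, add_assoc]⟩ }
  obtain ⟨i, hi, j, hj, hij⟩ := interleaved.exists_eq hw
  exact ⟨i, hi, j, hj, hij.symm⟩

end InterleavedPaths

section Level

variable {G : Type*} [AddCommGroup G] {S : Set G} {v x : G} {l m : ℤ}

/-- `x` lies `l` steps of `v` beyond the last point of `S` on the line `x + ℤ v`. A line that
misses `S` has no levels. -/
def IsLevel (S : Set G) (v x : G) (l : ℤ) : Prop := IsLeast {k : ℤ | x - k • v ∈ S} l

theorem IsLevel.eq (hl : IsLevel S v x l) (hm : IsLevel S v x m) : l = m := IsLeast.unique hl hm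

theorem IsLevel.add_smul (h : IsLevel S v x l) (k : ℤ) : IsLevel S v (x + k • v) (l + k) := by
  have shift : ∀ j : ℤ, x + k • v - j • v = x - (j - k) • v := fun j => by
    rw [sub_smul]
    abel
  refine ⟨?_, fun j hj => ?_⟩
  · simpa only [Set.mem_ofPred_eq, shift, add_sub_cancel_right] using h.1
  · rw [Set.mem_ofPred_eq, shift] at hj
    linarith [h.2 hj]

theorem exists_isLevel [IsAddTorsionFree G] (hS : S.Finite) (hv : v ≠ 0) (hl : x - l • v ∈ S) :
    ∃ m ≤ l, IsLevel S v x m := by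
  have line_injective : Function.Injective fun k : ℤ => x - k • v :=
    sub_right_injective.comp (smul_left_injective ℤ hv)
  obtain ⟨m, hm, hmin⟩ := Set.exists_min_image {k : ℤ | x - k • v ∈ S} id
    (hS.preimage line_injective.injOn) ⟨l, hl⟩
  exact ⟨m, hmin l hl, hm, hmin⟩

end Level

section Descent

/-- A grid step along which the level stays the same or drops by at least `2`. -/
def DescentStep (S : Set (ℤ × ℤ)) (v x y : ℤ × ℤ) : Prop :=
  GridAdj x y ∧ ∃ l m : ℤ, IsLevel S v x l ∧ IsLevel S v y m ∧ (m = l ∨ m + 2 ≤ l)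

/-- `y` can be reached from `x` by descent steps. -/
abbrev Descends (S : Set (ℤ × ℤ)) (v : ℤ × ℤ) : ℤ × ℤ → ℤ × ℤ → Prop :=
  Relation.ReflTransGen (DescentStep S v)

variable {S : Set (ℤ × ℤ)} {v x y : ℤ × ℤ} {l m : ℤ}

theorem DescentStep.add_smul (h : DescentStep S v x y) (k : ℤ) :
    DescentStep S v (x + k • v) (y + k • v) := by
  obtain ⟨hxy, l, m, hl, hm, hlm⟩ := h
  exact ⟨hxy.add_right _, l + k, m + k, hl.add_smul k, hm.add_smul k, by omega⟩

theorem Descends.add_smul (h : Descends S v x y) (k : ℤ) :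
    Descends S v (x + k • v) (y + k • v) :=
  h.lift (· + k • v) fun _ _ hxy => hxy.add_smul k

theorem Descends.sub_smul (h : Descends S v x y) (k : ℤ) :
    Descends S v (x - k • v) (y - k • v) := by
  simpa only [neg_smul, ← sub_eq_add_neg] using h.add_smul (-k)

theorem Descends.level_eq_or_le (h : Descends S v x y) (hl : IsLevel S v x l)
    (hm : IsLevel S v y m) : m = l ∨ m + 2 ≤ l := by
  induction h generalizing m with
  | refl => exact .inl (hm.eq hl)
  | tail _ hbc ih =>
    obtain ⟨-, l', m', hl', hm', hlm'⟩ := hbc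
    have := ih hl'
    have := hm.eq hm'
    omega

theorem Descends.eq_zero_or_le (hv : v ≠ 0) {k : ℤ} (h : Descends S v x (x + k • v)) :
    k = 0 ∨ k + 2 ≤ 0 := by
  rcases h.cases_head with heq | ⟨y, ⟨-, l, -, hl, -⟩, -⟩
  · exact .inl ((smul_eq_zero.1 (left_eq_add.1 heq)).resolve_right hv)
  · have := h.level_eq_or_le hl (hl.add_smul k)
    omega

theorem Descends.exists_isLevel (h : Descends S v x y) (hne : x ≠ y) : ∃ l, IsLevel S v x l := by
  rcases h.cases_head with rfl | ⟨y, ⟨-, l, -, hl, -⟩, -⟩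
  exacts [absurd rfl hne, ⟨l, hl⟩]

theorem finite_cross_image_descends (hS : S.Finite) (hv : v ≠ 0) {k : ℤ} (hk : k ≠ 0) :
    (cross (-v) '' {x | Descends S v x (x - k • v)}).Finite := by
  refine (hS.image (cross (-v))).subset ?_
  rintro _ ⟨x, hx, rfl⟩
  have hne : x ≠ x - k • v := fun h => smul_ne_zero hk hv (sub_eq_self.1 h.symm)
  obtain ⟨l, hl⟩ := Descends.exists_isLevel hx hne
  exact ⟨x - l • v, hl.1, cross_neg_sub_smul v x l⟩

theorem exists_descends_sub_pred_smul (hS : S.Finite) (hv : v ≠ 0) {k : ℤ} (hk : 2 ≤ k)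
    (hloop : ∃ x, Descends S v x (x - k • v)) : ∃ x, Descends S v x (x - (k - 1) • v) := by
  obtain ⟨x, hx, hmax⟩ := Set.Finite.exists_maximalFor' (cross (-v)) _
    (finite_cross_image_descends hS hv (by omega : k ≠ 0)) hloop
  obtain ⟨n, γ, rfl, hend, hγ⟩ := exists_seq_of_reflTransGen hx
  -- Every point of the path starts such a path itself, so it is no more extreme than `γ 0`.
  have cross_le : ∀ i ≤ n, cross (-v) (γ i) ≤ cross (-v) (γ 0) := fun i hi => by
    have to_γi : Descends S v (γ 0) (γ i) := reflTransGen_of_seq hγ i.zero_le hi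
    have from_γi : Descends S v (γ i) (γ 0 - k • v) := hend ▸ reflTransGen_of_seq hγ hi le_rfl
    exact (le_total _ _).elim id (hmax (from_γi.trans (to_γi.sub_smul k)))
  obtain ⟨i, hi, j, hj, hchord⟩ := exists_chord_of_cross_le (neg_ne_zero.2 hv) hk
    (fun i hi => (hγ i hi).1) (by rw [hend, smul_neg, sub_eq_add_neg]) cross_le
  rw [smul_neg, ← sub_eq_add_neg] at hchord
  rcases le_total j i with hji | hij
  · exact ⟨γ j, hchord ▸ reflTransGen_of_seq hγ hji hi⟩
  · have ascent : Descends S v (γ i) (γ i + (k - 1) • v) := by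
      rw [show γ i + (k - 1) • v = γ j by rw [hchord, sub_add_cancel]]
      exact reflTransGen_of_seq hγ hij hj
    have := ascent.eq_zero_or_le hv
    omega

theorem not_descends_sub_smul (hS : S.Finite) (hv : v ≠ 0) {k : ℤ} (hk : 1 ≤ k) (x : ℤ × ℤ) :
    ¬Descends S v x (x - k • v) := by
  induction k, hk using Int.leInduction generalizing x with
  | base =>
    intro h
    rw [sub_eq_add_neg, ← neg_smul] at h
    have := h.eq_zero_or_le hv
    omega
  | succ k hk ih =>
    intro h
    obtain ⟨y, hy⟩ := exists_descends_sub_pred_smul hS hv (by omega) ⟨x, h⟩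
    exact ih y (by simpa using hy)

theorem exists_isLevel_forall_descends (hS : S.Finite) (hne : S.Nonempty) (hv : v ≠ 0) (l : ℤ) :
    ∃ x, IsLevel S v x l ∧ ∀ y m, Descends S v x y → IsLevel S v y m → m = l := by
  have level_finite : {x | IsLevel S v x l}.Finite :=
    (hS.preimage (sub_left_injective (b := l • v)).injOn).subset fun x hx => hx.1
  have level_nonempty : {x | IsLevel S v x l}.Nonempty := by
    obtain ⟨p, hp⟩ := hne
    obtain ⟨m, -, hm⟩ := exists_isLevel (l := 0) hS hv (by simpa using hp)
    exact ⟨_, by simpa using hm.add_smul (l - m)⟩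
  let below (y x : {x | IsLevel S v x l}) : Prop :=
    ∃ k : ℤ, 1 ≤ k ∧ Descends S v x (y - k • v)
  have : Finite {x | IsLevel S v x l} := level_finite
  have : Std.Irrefl below := ⟨fun x ⟨k, hk, hx⟩ => not_descends_sub_smul hS hv hk x hx⟩
  have : IsTrans _ below := ⟨fun z y x ⟨k, hk, hyz⟩ ⟨k', hk', hxy⟩ => by
    refine ⟨k + k', by omega, ?_⟩
    rw [add_smul, ← sub_sub]
    exact hxy.trans (hyz.sub_smul k')⟩
  obtain ⟨⟨x, hx⟩, -, hmin⟩ := (Finite.wellFounded_of_trans_of_irrefl below).has_min Set.univ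
    ⟨⟨_, level_nonempty.some_mem⟩, trivial⟩
  refine ⟨x, hx, fun y m hxy hm => ?_⟩
  refine (hxy.level_eq_or_le hx hm).resolve_right fun hlt => ?_
  have hy : IsLevel S v (y + (l - m) • v) l := by simpa using hm.add_smul (l - m)
  exact hmin ⟨_, hy⟩ trivial ⟨l - m, by omega, by simpa using hxy⟩

end Descent

section Component

variable {S : Set (ℤ × ℤ)} {v x : ℤ × ℤ}

theorem mem_setTranslate_diff :
    x ∈ setTranslate (setTranslate S v) v \ setTranslate S v ↔
      x - (2 : ℤ) • v ∈ S ∧ x - (1 : ℤ) • v ∉ S := by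
  rw [Set.mem_sdiff, mem_setTranslate, mem_setTranslate, mem_setTranslate, two_smul, one_smul,
    sub_sub]

theorem IsLevel.mem_setTranslate_diff (h : IsLevel S v x 2) :
    x ∈ setTranslate (setTranslate S v) v \ setTranslate S v :=
  _root_.mem_setTranslate_diff.2 ⟨h.1, fun h₁ => absurd (h.2 h₁) (by norm_num)⟩

theorem exists_isLevel_of_mem_setTranslate_diff (hS : S.Finite) (hv : v ≠ 0)
    (hx : x ∈ setTranslate (setTranslate S v) v \ setTranslate S v) :
    ∃ m, IsLevel S v x m ∧ (m = 2 ∨ m + 2 ≤ 2) := by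
  rw [mem_setTranslate_diff] at hx
  obtain ⟨m, hm₂, hm⟩ := exists_isLevel hS hv hx.1
  have hm₁ : m ≠ 1 := by
    rintro rfl
    exact hx.2 hm.1
  exact ⟨m, hm, by omega⟩

theorem isLevel_two_of_mem_gridComponentOf (hS : S.Finite) (hv : v ≠ 0) (hx : IsLevel S v x 2)
    (hmin : ∀ y m, Descends S v x y → IsLevel S v y m → m = 2) {y : ℤ × ℤ}
    (hy : y ∈ gridComponentOf (setTranslate (setTranslate S v) v \ setTranslate S v) x) :
    IsLevel S v y 2 := by
  suffices Descends S v x y ∧ IsLevel S v y 2 from this.2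
  induction hy with
  | refl => exact ⟨.refl, hx⟩
  | @tail b c _ hbc ih =>
    obtain ⟨hxb, hb⟩ := ih
    obtain ⟨hadj, -, hc⟩ := hbc
    obtain ⟨m, hm, hm₂⟩ := exists_isLevel_of_mem_setTranslate_diff hS hv hc
    have hxc : Descends S v x c := hxb.tail ⟨hadj, 2, m, hb, hm, hm₂⟩
    exact ⟨hxc, hmin c m hxc hm ▸ hm⟩

end Component

theorem shape_component_avoiding_general (S₀ : Set (ℤ × ℤ)) (hfin : S₀.Finite)
    (hne : S₀.Nonempty) (v : ℤ × ℤ) (hv : v ≠ 0) :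
    ∃ C : Set (ℤ × ℤ),
      IsGridComponent (setTranslate (setTranslate S₀ v) v \ setTranslate S₀ v) C ∧
      C ∩ S₀ = ∅ := by
  obtain ⟨x, hx, hmin⟩ := exists_isLevel_forall_descends hfin hne hv 2
  refine ⟨_, isGridComponent_gridComponentOf hx.mem_setTranslate_diff, ?_⟩
  rw [← Set.disjoint_iff_inter_eq_empty, Set.disjoint_left]
  intro y hyC hyS
  have hy : IsLevel S₀ v y 2 := isLevel_two_of_mem_gridComponentOf hfin hv hx hmin hyC
  have level_le : (2 : ℤ) ≤ 0 := hy.2 (by simpa using hyS)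
  omega

/-- If `S₀` is a shape, `S₁ = S₀ + v` and `S₂ = S₁ + v` for a nonzero vector `v`,
then some connected component of `S₂ \ S₁` does not intersect `S₀`. -/
theorem shape_component_avoiding (S₀ : Set (ℤ × ℤ))
    (hfin : S₀.Finite) (hne : S₀.Nonempty) (hconn : GridConnected S₀)
    (v : ℤ × ℤ) (hv : v ≠ 0) :
    ∃ C : Set (ℤ × ℤ),
      IsGridComponent (setTranslate (setTranslate S₀ v) v \ setTranslate S₀ v) C ∧
      C ∩ S₀ = ∅ :=
  shape_component_avoiding_general S₀ hfin hne v hv
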